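/- Let Theta in k((X^{-1})) be badly approximable with |Theta| <= 1/2, convergents (p_n/q_n), and suppose there exist x > 0, finite words U_k and palindromic words V_k over k[X] \ k such that the continued fraction of Theta begins with U_k V_k for every k, with |V_{k+1}| > |V_k| >= x |U_k|. Set M = limsup (deg q_l)/l and m = liminf (deg q_l)/l. If x > 3M/m - 1, then inf_{q in k[X] \ {0}} |q| * ||q Theta|| * ||q Theta^{-1}|| = 0. -/

import Mathlib

open Polynomial Filter

noncomputable section
open scoped Classical

namespace Littlewood

variable (k : Type*) [Field k]

/-- The element `X` of `k((X⁻¹))`: the inverse of the Laurent-series variable `t = X⁻¹`. -/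
def XLS : LaurentSeries k := (HahnSeries.single (1 : ℤ) (1 : k))⁻¹

variable {k}

/-- Embedding of `k[X]` into `k((X⁻¹))`, sending the polynomial variable to `X`. -/
def emb (p : Polynomial k) : LaurentSeries k := Polynomial.aeval (XLS k) p

/-- The degree of a Laurent series in `X⁻¹`: if `F = ∑_{h ≥ -m} f_h X^{-h}` with
`f_{-m} ≠ 0` then `deg F = m`. -/
def deg (F : LaurentSeries k) : ℤ := -F.order

/-- The norm `|F| = 2 ^ deg F`, with `|0| = 0`. -/
def lnorm (F : LaurentSeries k) : ℝ := if F = 0 then 0 else (2 : ℝ) ^ (deg F)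

/-- Fractional part: the part of the series comprising only negative powers of `X`. -/
def frac (F : LaurentSeries k) : LaurentSeries k where
  coeff n := if 1 ≤ n then F.coeff n else 0
  isPWO_support' := F.isPWO_support'.mono (fun n hn => by
    simp only [Function.mem_support] at hn ⊢
    intro h
    exact hn (by simp [h]))

/-- `‖F‖`: the norm of the fractional part of `F`. -/
def fnorm (F : LaurentSeries k) : ℝ := lnorm (frac F)

/-- `F` is a rational function. -/
def IsRat (F : LaurentSeries k) : Prop :=
  ∃ p q : Polynomial k, q ≠ 0 ∧ F * emb q = emb p

/-- The polynomial part of a Laurent series (the part with nonnegative powers of `X`). -/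
def polyPart (F : LaurentSeries k) : Polynomial k :=
  ∑ i ∈ Finset.range ((-F.order).toNat + 1), Polynomial.C (F.coeff (-(i : ℤ))) * Polynomial.X ^ i

/-- The complete quotients of the continued fraction algorithm applied to `F`. -/
def cfRem (F : LaurentSeries k) : ℕ → LaurentSeries k
  | 0 => F
  | n + 1 => (cfRem F n - emb (polyPart (cfRem F n)))⁻¹

/-- The partial quotients of the continued fraction expansion of `F`. -/
def pq (F : LaurentSeries k) (n : ℕ) : Polynomial k := polyPart (cfRem F n)

/-- Denominators `q_n` of the convergents of the continued fraction with
partial quotients `a`. -/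
def den (a : ℕ → Polynomial k) : ℕ → Polynomial k
  | 0 => 1
  | 1 => a 1
  | n + 2 => a (n + 2) * den a (n + 1) + den a n

/-- Numerators `p_n` of the convergents. -/
def num (a : ℕ → Polynomial k) : ℕ → Polynomial k
  | 0 => a 0
  | 1 => a 1 * a 0 + 1
  | n + 2 => a (n + 2) * num a (n + 1) + num a n

/-- The value of a finite continued fraction `[b_0, b_1, …, b_m]` over `k[X]`. -/
def finCF : List (Polynomial k) → LaurentSeries k
  | [] => 0
  | [b] => emb b
  | b :: l => emb b + (finCF l)⁻¹

/-- `F` is badly approximable. -/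
def Bad (F : LaurentSeries k) : Prop :=
  ∃ c : ℝ, 0 < c ∧ ∀ q : Polynomial k, q ≠ 0 → c ≤ lnorm (emb q) * fnorm (emb q * F)

/-!
Put `a = a₁ a₂ …` for the partial quotients of `Θ` and let `Q` be the denominator of the last but
one convergent of `[0, U, V, W]`, where `W` is the mirror image of `U`. The word `w = U V W` is a
palindrome, so the matrix product `∏ (c 1; 1 0)` over the letters `c` of `w` is symmetric, and `Q`
is also the numerator of the last convergent: `P/Q` and `Q/R` approximate `Θ`, hence `R/Q`
approximates `Θ⁻¹`. Since `w` and `a` agree on the first `n = |U V|` letters, both errors `|QΘ - P|`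
and `|RΘ - Q|` are at most `|R| / |q_n|²`, where `|R| = |q_n| |q_{|U|}|`. Therefore
`|Q| ‖QΘ‖ ‖QΘ⁻¹‖ ≤ |Θ|⁻¹ |q_{|U|}|³ / |q_n|`, and the lower bound on `x` forces
`3 deg q_{|U|} - deg q_n` to tend to `-∞`.
-/

section Norm

lemma coeff_emb (p : Polynomial k) (n : ℤ) :
    (emb p).coeff n = if n ≤ 0 then p.coeff n.natAbs else 0 := by
  have hX (i : ℕ) : XLS k ^ i = HahnSeries.single (-(i : ℤ)) (1 : k) := by
    rw [XLS, HahnSeries.inv_single, HahnSeries.single_pow]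
    simp
  induction p using Polynomial.induction_on' with
  | add p q hp hq =>
    simp only [emb, map_add, HahnSeries.coeff_add] at hp hq ⊢
    rw [hp, hq]
    split_ifs <;> simp
  | monomial i a =>
    rw [emb, Polynomial.aeval_monomial, hX, HahnSeries.algebraMap_apply',
      PowerSeries.algebraMap_apply, HahnSeries.ofPowerSeries_C, HahnSeries.C_mul_eq_smul,
      HahnSeries.coeff_smul, HahnSeries.coeff_single, Polynomial.coeff_monomial,
      Algebra.algebraMap_self_apply]
    split_ifs <;> first | omega | simp

lemma emb_zero : emb (0 : Polynomial k) = 0 := map_zero _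

lemma emb_one : emb (1 : Polynomial k) = 1 := map_one _

lemma emb_add (p q : Polynomial k) : emb (p + q) = emb p + emb q := map_add _ p q

lemma emb_mul (p q : Polynomial k) : emb (p * q) = emb p * emb q := map_mul _ p q

lemma emb_eq_zero {p : Polynomial k} : emb p = 0 ↔ p = 0 := by
  refine ⟨fun h => ?_, fun h => h ▸ emb_zero⟩
  have hlead := coeff_emb p (-(p.natDegree : ℤ))
  rw [h, HahnSeries.coeff_zero, if_pos (by omega), Int.natAbs_neg, Int.natAbs_natCast] at hlead
  exact leadingCoeff_eq_zero.mp hlead.symm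

lemma order_emb {p : Polynomial k} (hp : p ≠ 0) : (emb p).order = -(p.natDegree : ℤ) := by
  apply le_antisymm
  · apply HahnSeries.order_le_of_coeff_ne_zero
    simpa [coeff_emb] using hp
  · by_contra! hlt
    apply HahnSeries.coeff_order_eq_zero.not.mpr (emb_eq_zero.not.mpr hp)
    rw [coeff_emb, if_pos (by omega)]
    exact Polynomial.coeff_eq_zero_of_natDegree_lt (by omega)

lemma lnorm_of_ne_zero {F : LaurentSeries k} (hF : F ≠ 0) : lnorm F = (2 : ℝ) ^ (-F.order) :=
  if_neg hF

lemma lnorm_zero : lnorm (0 : LaurentSeries k) = 0 := if_pos rfl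

lemma lnorm_one : lnorm (1 : LaurentSeries k) = 1 := by
  simp [lnorm_of_ne_zero]

lemma lnorm_pos {F : LaurentSeries k} : 0 < lnorm F ↔ F ≠ 0 := by
  refine ⟨fun h hF => (hF ▸ h).ne' lnorm_zero, fun hF => ?_⟩
  rw [lnorm_of_ne_zero hF]
  positivity

lemma lnorm_nonneg (F : LaurentSeries k) : 0 ≤ lnorm F := by
  unfold lnorm
  split_ifs <;> positivity

lemma lnorm_neg (F : LaurentSeries k) : lnorm (-F) = lnorm F := by
  simp [lnorm, deg, HahnSeries.order_neg]

lemma lnorm_mul (F G : LaurentSeries k) : lnorm (F * G) = lnorm F * lnorm G := by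
  by_cases hF : F = 0
  · simp [hF, lnorm_zero]
  by_cases hG : G = 0
  · simp [hG, lnorm_zero]
  rw [lnorm_of_ne_zero hF, lnorm_of_ne_zero hG, lnorm_of_ne_zero (mul_ne_zero hF hG),
    HahnSeries.order_mul hF hG, neg_add, zpow_add₀ two_ne_zero]

lemma lnorm_inv (F : LaurentSeries k) : lnorm F⁻¹ = (lnorm F)⁻¹ := by
  by_cases hF : F = 0
  · simp [hF, lnorm_zero]
  apply eq_inv_of_mul_eq_one_left
  rw [← lnorm_mul, inv_mul_cancel₀ hF, lnorm_one]

lemma lnorm_le_of_coeff_eq_zero {F : LaurentSeries k} {n : ℤ} (h : ∀ i < n, F.coeff i = 0) :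
    lnorm F ≤ (2 : ℝ) ^ (-n) := by
  by_cases hF : F = 0
  · rw [hF, lnorm_zero]
    positivity
  rw [lnorm_of_ne_zero hF]
  refine zpow_le_zpow_right₀ one_le_two (neg_le_neg ?_)
  by_contra! hlt
  exact HahnSeries.coeff_order_eq_zero.not.mpr hF (h _ hlt)

lemma isNonarchimedean_lnorm : IsNonarchimedean (lnorm : LaurentSeries k → ℝ) := by
  intro F G
  by_cases hF : F = 0
  · simp [hF]
  by_cases hG : G = 0
  · simp [hG]
  have h : lnorm (F + G) ≤ (2 : ℝ) ^ (-min F.order G.order) := by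
    refine lnorm_le_of_coeff_eq_zero fun i hi => ?_
    rw [HahnSeries.coeff_add, HahnSeries.coeff_eq_zero_of_lt_order (by omega),
      HahnSeries.coeff_eq_zero_of_lt_order (by omega), add_zero]
  refine h.trans ?_
  rw [lnorm_of_ne_zero hF, lnorm_of_ne_zero hG]
  rcases min_choice F.order G.order with h | h <;> rw [h]
  · exact le_max_left _ _
  · exact le_max_right _ _

lemma lnorm_add_eq_left_of_lt {F G : LaurentSeries k} (h : lnorm G < lnorm F) :
    lnorm (F + G) = lnorm F := by
  rw [IsNonarchimedean.add_eq_max_of_ne' lnorm isNonarchimedean_lnorm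
    (fun a => (lnorm_neg a).symm) h.ne', max_eq_left h.le]

lemma lnorm_emb {p : Polynomial k} (hp : p ≠ 0) : lnorm (emb p) = (2 : ℝ) ^ p.natDegree := by
  rw [lnorm_of_ne_zero (emb_eq_zero.not.mpr hp), order_emb hp, neg_neg, zpow_natCast]

lemma emb_polyPart_add_frac (F : LaurentSeries k) : emb (polyPart F) + frac F = F := by
  ext n
  simp only [HahnSeries.coeff_add, coeff_emb, polyPart, frac, Polynomial.finsetSum_coeff,
    Polynomial.coeff_C_mul, Polynomial.coeff_X_pow]
  rcases lt_or_ge 0 n with hn | hn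
  · simp [hn.not_ge, show 1 ≤ n from hn]
  · obtain ⟨j, rfl⟩ : ∃ j : ℕ, n = -(j : ℤ) := ⟨n.natAbs, by omega⟩
    simp only [hn, show ¬ (1 : ℤ) ≤ -j by omega, if_true, if_false, add_zero, Int.natAbs_neg,
      Int.natAbs_natCast, mul_ite, mul_one, mul_zero, Finset.sum_ite_eq, Finset.mem_range]
    split_ifs with h
    · rfl
    · exact (HahnSeries.coeff_eq_zero_of_lt_order (by omega)).symm

lemma frac_sub_emb (F : LaurentSeries k) (p : Polynomial k) : frac (F - emb p) = frac F := by
  ext n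
  simp only [frac, HahnSeries.coeff_sub, coeff_emb]
  split_ifs with h1 h2
  · omega
  · simp
  · rfl

lemma fnorm_le_lnorm (F : LaurentSeries k) : fnorm F ≤ lnorm F := by
  by_cases hF : F = 0
  · have hfrac : frac F = 0 := by ext n; simp [frac, hF]
    rw [fnorm, hfrac, hF]
  rw [lnorm_of_ne_zero hF]
  refine lnorm_le_of_coeff_eq_zero fun i hi => ?_
  simp only [frac, HahnSeries.coeff_eq_zero_of_lt_order hi, ite_self]

lemma fnorm_le_half (F : LaurentSeries k) : fnorm F ≤ 1 / 2 := by
  have h : fnorm F ≤ (2 : ℝ) ^ (-1 : ℤ) :=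
    lnorm_le_of_coeff_eq_zero fun i hi => if_neg (by omega)
  simpa using h

lemma fnorm_le_lnorm_sub_emb (F : LaurentSeries k) (p : Polynomial k) :
    fnorm F ≤ lnorm (F - emb p) := by
  rw [fnorm, ← frac_sub_emb F p]
  exact fnorm_le_lnorm _

lemma lnorm_emb_polyPart {F : LaurentSeries k} (hF : 1 / 2 < lnorm F) :
    lnorm (emb (polyPart F)) = lnorm F := by
  have hsub : emb (polyPart F) = F + -frac F := by
    linear_combination emb_polyPart_add_frac F
  rw [hsub]
  apply lnorm_add_eq_left_of_lt
  rw [lnorm_neg]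
  exact (fnorm_le_half F).trans_lt hF

end Norm

section ContinuedFractionAlgorithm

variable {F : LaurentSeries k}

lemma isRat_emb (p : Polynomial k) : IsRat (emb p) :=
  ⟨p, 1, one_ne_zero, by rw [emb_one, mul_one]⟩

lemma ne_emb_of_not_isRat (hF : ¬ IsRat F) (p : Polynomial k) : F ≠ emb p :=
  fun h => hF (h ▸ isRat_emb p)

lemma ne_zero_of_not_isRat (hF : ¬ IsRat F) : F ≠ 0 :=
  emb_zero (k := k) ▸ ne_emb_of_not_isRat hF 0

lemma frac_ne_zero_of_not_isRat (hF : ¬ IsRat F) : frac F ≠ 0 := by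
  intro h
  have hpoly := emb_polyPart_add_frac F
  rw [h, add_zero] at hpoly
  exact ne_emb_of_not_isRat hF _ hpoly.symm

lemma not_isRat_inv_sub_emb (hF : ¬ IsRat F) (p : Polynomial k) : ¬ IsRat (F - emb p)⁻¹ := by
  rintro ⟨p', q, hq, h⟩
  have hne : F - emb p ≠ 0 := sub_ne_zero.mpr (ne_emb_of_not_isRat hF p)
  have hq' : emb q = (F - emb p) * emb p' := by
    rw [← h]
    field_simp
  have hp' : p' ≠ 0 := by
    rintro rfl
    rw [emb_zero, mul_zero] at hq'
    exact hq (emb_eq_zero.mp hq')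
  exact hF ⟨q + p * p', p', hp', by rw [emb_add, emb_mul, hq']; ring⟩

lemma not_isRat_cfRem (hF : ¬ IsRat F) (n : ℕ) : ¬ IsRat (cfRem F n) := by
  induction n with
  | zero => exact hF
  | succ n ih => exact not_isRat_inv_sub_emb ih _

lemma cfRem_sub_emb_pq (F : LaurentSeries k) (n : ℕ) :
    cfRem F n - emb (pq F n) = frac (cfRem F n) :=
  sub_eq_of_eq_add' (emb_polyPart_add_frac _).symm

lemma frac_cfRem_mul_cfRem_succ (hF : ¬ IsRat F) (n : ℕ) :
    frac (cfRem F n) * cfRem F (n + 1) = 1 := by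
  rw [← cfRem_sub_emb_pq]
  refine mul_inv_cancel₀ ?_
  rw [cfRem_sub_emb_pq]
  exact frac_ne_zero_of_not_isRat (not_isRat_cfRem hF n)

lemma two_le_lnorm_cfRem_succ (hF : ¬ IsRat F) (n : ℕ) : 2 ≤ lnorm (cfRem F (n + 1)) := by
  have hmul := congrArg lnorm (frac_cfRem_mul_cfRem_succ hF n)
  rw [lnorm_mul, lnorm_one] at hmul
  have hfrac : lnorm (frac (cfRem F n)) ≤ 1 / 2 := fnorm_le_half _
  nlinarith [lnorm_nonneg (cfRem F (n + 1))]

lemma lnorm_emb_pq_succ (hF : ¬ IsRat F) (n : ℕ) :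
    lnorm (emb (pq F (n + 1))) = lnorm (cfRem F (n + 1)) :=
  lnorm_emb_polyPart (by linarith [two_le_lnorm_cfRem_succ hF n])

lemma two_le_lnorm_emb_pq_succ (hF : ¬ IsRat F) (n : ℕ) : 2 ≤ lnorm (emb (pq F (n + 1))) :=
  (two_le_lnorm_cfRem_succ hF n).trans_eq (lnorm_emb_pq_succ hF n).symm

end ContinuedFractionAlgorithm

section Word

/-- The finite word `a_{m+1} a_{m+2} … a_{m+n}` of a sequence `a` of partial quotients. -/
def word (a : ℕ → Polynomial k) (m n : ℕ) : List (Polynomial k) :=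
  (List.range' (m + 1) n).map a

/-- The sequence of partial quotients of the finite continued fraction `[0, w]`. It is continued by
the nonconstant letter `X`, so that every later convergent makes sense as well. -/
def ofWord (w : List (Polynomial k)) : ℕ → Polynomial k
  | 0 => 0
  | i + 1 => w.getD i X

lemma length_word (a : ℕ → Polynomial k) (m n : ℕ) : (word a m n).length = n := by
  simp [word]

lemma word_succ (a : ℕ → Polynomial k) (m n : ℕ) :
    word a m (n + 1) = word a m n ++ [a (m + n + 1)] := by
  simp [word, List.range'_1_concat, add_right_comm]

lemma word_append_word (a : ℕ → Polynomial k) (m n : ℕ) :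
    word a 0 m ++ word a m n = word a 0 (m + n) := by
  rw [word, word, word, ← List.map_append, zero_add, add_comm m 1, List.range'_append_1]

lemma reverse_word_eq_self {a : ℕ → Polynomial k} {m n : ℕ}
    (h : ∀ i, 1 ≤ i → i ≤ n → a (m + i) = a (m + n + 1 - i)) :
    (word a m n).reverse = word a m n := by
  rw [word, ← List.map_reverse]
  refine List.ext_getElem (by simp) fun i hi _ => ?_
  have hin : i < n := by simpa using hi
  simp only [List.getElem_map, List.getElem_reverse, List.getElem_range', List.length_range']
  rw [show m + 1 + 1 * i = m + (i + 1) by ring, h (i + 1) (by omega) hin]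
  congr 1
  omega

lemma word_ofWord (w : List (Polynomial k)) : word (ofWord w) 0 w.length = w := by
  refine List.ext_getElem (length_word _ _ _) fun i _ hi => ?_
  simp [word, ofWord, add_comm 1 i, hi]

lemma ofWord_eq_of_prefix {a : ℕ → Polynomial k} {n : ℕ} {w : List (Polynomial k)}
    (h0 : a 0 = 0) (hw : word a 0 n <+: w) {i : ℕ} (hi : i ≤ n) : ofWord w i = a i := by
  obtain ⟨t, rfl⟩ := hw
  cases i with
  | zero => exact h0.symm
  | succ i =>
    have hlt : i < (word a 0 n).length := by rwa [length_word]
    rw [ofWord, List.getD_append _ _ _ _ hlt, List.getD_eq_getElem _ _ hlt]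
    simp [word, add_comm]

lemma forall_mem_word {a : ℕ → Polynomial k} {P : Polynomial k → Prop} (h : ∀ i, P (a (i + 1)))
    (m n : ℕ) : ∀ c ∈ word a m n, P c := by
  simp only [word, List.mem_map, List.mem_range'_1]
  rintro _ ⟨i, hi, rfl⟩
  obtain ⟨j, rfl⟩ : ∃ j, i = j + 1 := ⟨i - 1, by omega⟩
  exact h j

lemma two_le_lnorm_emb_ofWord_succ {w : List (Polynomial k)}
    (hw : ∀ c ∈ w, 2 ≤ lnorm (emb c)) (i : ℕ) : 2 ≤ lnorm (emb (ofWord w (i + 1))) := by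
  rw [ofWord]
  rcases lt_or_ge i w.length with hi | hi
  · rw [List.getD_eq_getElem _ _ hi]
    exact hw _ (List.getElem_mem hi)
  · rw [List.getD_eq_default _ _ hi, lnorm_emb X_ne_zero, natDegree_X, pow_one]

end Word

section Convergents

variable {a b : ℕ → Polynomial k}

lemma den_congr : ∀ {n : ℕ}, (∀ i ≤ n, a i = b i) → den a n = den b n
  | 0, _ => rfl
  | 1, h => h 1 le_rfl
  | n + 2, h => by
    rw [den, den, h _ le_rfl, den_congr fun i hi => h i (by omega),
      den_congr (n := n) fun i hi => h i (by omega)]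

lemma num_congr : ∀ {n : ℕ}, (∀ i ≤ n, a i = b i) → num a n = num b n
  | 0, h => h 0 le_rfl
  | 1, h => by rw [num, num, h 1 le_rfl, h 0 zero_le_one]
  | n + 2, h => by
    rw [num, num, h _ le_rfl, num_congr fun i hi => h i (by omega),
      num_congr (n := n) fun i hi => h i (by omega)]

lemma lnorm_emb_den_pos_and_succ (hb : ∀ i, 2 ≤ lnorm (emb (b (i + 1)))) (n : ℕ) :
    0 < lnorm (emb (den b n)) ∧
      lnorm (emb (den b (n + 1))) = lnorm (emb (b (n + 1))) * lnorm (emb (den b n)) := by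
  induction n with
  | zero => simp [den, emb_one, lnorm_one]
  | succ n ih =>
    obtain ⟨hpos, hsucc⟩ := ih
    have hlt : lnorm (emb (den b n)) < lnorm (emb (den b (n + 1))) := by
      rw [hsucc]
      nlinarith [hb n]
    refine ⟨hpos.trans hlt, ?_⟩
    rw [den, emb_add, emb_mul, ← lnorm_mul]
    apply lnorm_add_eq_left_of_lt
    rw [lnorm_mul]
    nlinarith [hb (n + 1)]

lemma lnorm_emb_den_pos (hb : ∀ i, 2 ≤ lnorm (emb (b (i + 1)))) (n : ℕ) :
    0 < lnorm (emb (den b n)) :=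
  (lnorm_emb_den_pos_and_succ hb n).1

lemma lnorm_emb_den_succ (hb : ∀ i, 2 ≤ lnorm (emb (b (i + 1)))) (n : ℕ) :
    lnorm (emb (den b (n + 1))) = lnorm (emb (b (n + 1))) * lnorm (emb (den b n)) :=
  (lnorm_emb_den_pos_and_succ hb n).2

lemma den_ne_zero (hb : ∀ i, 2 ≤ lnorm (emb (b (i + 1)))) (n : ℕ) : den b n ≠ 0 :=
  emb_eq_zero.not.mp (lnorm_pos.mp (lnorm_emb_den_pos hb n))

lemma lnorm_emb_den_le_succ (hb : ∀ i, 2 ≤ lnorm (emb (b (i + 1)))) (n : ℕ) :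
    lnorm (emb (den b n)) ≤ lnorm (emb (den b (n + 1))) := by
  rw [lnorm_emb_den_succ hb]
  exact le_mul_of_one_le_left (lnorm_nonneg _) (by linarith [hb n])

lemma lnorm_emb_den_eq_prod (hb : ∀ i, 2 ≤ lnorm (emb (b (i + 1)))) (n : ℕ) :
    lnorm (emb (den b n)) = ((word b 0 n).map fun c => lnorm (emb c)).prod := by
  induction n with
  | zero => simp [den, word, emb_one, lnorm_one]
  | succ n ih => simp [lnorm_emb_den_succ hb, word_succ, ih, mul_comm]

lemma lnorm_emb_den_ofWord {w : List (Polynomial k)} (hw : ∀ c ∈ w, 2 ≤ lnorm (emb c)) :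
    lnorm (emb (den (ofWord w) w.length)) = (w.map fun c => lnorm (emb c)).prod := by
  rw [lnorm_emb_den_eq_prod (two_le_lnorm_emb_ofWord_succ hw), word_ofWord]

lemma le_natDegree_den (hb : ∀ i, 2 ≤ lnorm (emb (b (i + 1)))) (n : ℕ) :
    n ≤ (den b n).natDegree := by
  have hpow : (2 : ℝ) ^ n ≤ lnorm (emb (den b n)) := by
    induction n with
    | zero => simp [den, emb_one, lnorm_one]
    | succ n ih =>
      rw [lnorm_emb_den_succ hb, pow_succ']
      exact mul_le_mul (hb n) ih (by positivity) (lnorm_nonneg _)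
  rwa [lnorm_emb (den_ne_zero hb n), pow_le_pow_iff_right₀ one_lt_two] at hpow

lemma prod_map_matrix_word (h0 : b 0 = 0) (n : ℕ) :
    ((word b 0 (n + 1)).map fun c => !![c, 1; 1, 0]).prod
      = !![den b (n + 1), den b n; num b (n + 1), num b n] := by
  induction n with
  | zero => simp [word, den, num, h0]
  | succ n ih =>
    rw [word_succ, List.map_append, List.prod_append, ih]
    simp [den, num, mul_comm (den b (n + 1)), mul_comm (num b (n + 1))]

lemma transpose_prod_map_matrix (w : List (Polynomial k)) :
    (w.map fun c => !![c, 1; 1, 0]).prod.transpose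
      = (w.reverse.map fun c => !![c, 1; 1, 0]).prod := by
  have hsymm (c : Polynomial k) : (!![c, 1; 1, 0] : Matrix _ _ _).transpose = !![c, 1; 1, 0] := by
    ext i j
    fin_cases i <;> fin_cases j <;> rfl
  simp only [Matrix.transpose_list_prod, List.map_map, List.map_reverse, Function.comp_def, hsymm]

lemma num_succ_eq_den_of_reverse_word_eq (h0 : b 0 = 0) {n : ℕ}
    (hb : (word b 0 (n + 1)).reverse = word b 0 (n + 1)) : num b (n + 1) = den b n := by
  have hT := transpose_prod_map_matrix (word b 0 (n + 1))
  rw [hb, prod_map_matrix_word h0] at hT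
  simpa using congrFun (congrFun hT 0) 1

end Convergents

section ConvergentError

/-- The error `q_n F - p_n` of the `n`-th convergent of `b` as an approximation of `F`. The sequence
`b` need not be the one of the partial quotients of `F`. -/
def convErr (b : ℕ → Polynomial k) (F : LaurentSeries k) (n : ℕ) : LaurentSeries k :=
  emb (den b n) * F - emb (num b n)

variable {a b : ℕ → Polynomial k} {F : LaurentSeries k}

lemma convErr_congr {n : ℕ} (h : ∀ i ≤ n, a i = b i) : convErr a F n = convErr b F n := by
  rw [convErr, convErr, den_congr h, num_congr h]

lemma convErr_add_two (b : ℕ → Polynomial k) (F : LaurentSeries k) (n : ℕ) :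
    convErr b F (n + 2) = emb (b (n + 2)) * convErr b F (n + 1) + convErr b F n := by
  simp only [convErr, den, num, emb_add, emb_mul]
  ring

lemma convErr_pq_zero (F : LaurentSeries k) : convErr (pq F) F 0 = frac F := by
  rw [convErr, den, num, emb_one, one_mul]
  exact cfRem_sub_emb_pq F 0

lemma convErr_pq_succ_mul_cfRem (hF : ¬ IsRat F) (n : ℕ) :
    convErr (pq F) F (n + 1) * cfRem F (n + 2) = -convErr (pq F) F n := by
  have hstep (n : ℕ) : (cfRem F n - emb (pq F n)) * cfRem F (n + 1) = 1 := by
    rw [cfRem_sub_emb_pq, frac_cfRem_mul_cfRem_succ hF]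
  induction n with
  | zero =>
    have h0 : (F - emb (pq F 0)) * cfRem F 1 = 1 := hstep 0
    simp only [convErr, den, num, emb_add, emb_mul, emb_one]
    linear_combination cfRem F 2 * h0 - (F - emb (pq F 0)) * hstep 1
  | succ n ih =>
    rw [convErr_add_two]
    linear_combination cfRem F (n + 3) * ih - convErr (pq F) F (n + 1) * hstep (n + 2)

lemma lnorm_convErr_pq (hF : ¬ IsRat F) (n : ℕ) :
    lnorm (convErr (pq F) F n) = (lnorm (emb (den (pq F) (n + 1))))⁻¹ := by
  have ha := two_le_lnorm_emb_pq_succ hF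
  apply eq_inv_of_mul_eq_one_left
  induction n with
  | zero =>
    rw [convErr_pq_zero, den, lnorm_emb_pq_succ hF, ← lnorm_mul]
    exact (congrArg lnorm (frac_cfRem_mul_cfRem_succ hF 0)).trans lnorm_one
  | succ n ih =>
    rw [lnorm_emb_den_succ ha, lnorm_emb_pq_succ hF, ← mul_assoc, ← lnorm_mul,
      convErr_pq_succ_mul_cfRem hF, lnorm_neg, ih]

lemma max_lnorm_convErr_succ_le {n : ℕ} (hb : 1 ≤ lnorm (emb (b (n + 2)))) :
    max (lnorm (convErr b F (n + 1))) (lnorm (convErr b F (n + 2))) ≤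
      lnorm (emb (b (n + 2))) * max (lnorm (convErr b F n)) (lnorm (convErr b F (n + 1))) := by
  set e := max (lnorm (convErr b F n)) (lnorm (convErr b F (n + 1)))
  have he : e ≤ lnorm (emb (b (n + 2))) * e :=
    le_mul_of_one_le_left (le_max_of_le_left (lnorm_nonneg _)) hb
  refine max_le ((le_max_right _ _).trans he) ?_
  rw [convErr_add_two]
  refine (isNonarchimedean_lnorm _ _).trans (max_le ?_ ((le_max_left _ _).trans he))
  rw [lnorm_mul]
  exact mul_le_mul_of_nonneg_left (le_max_right _ _) (lnorm_nonneg _)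

lemma max_lnorm_convErr_le_mul_lnorm_den (hb : ∀ i, 2 ≤ lnorm (emb (b (i + 1)))) {C : ℝ}
    {j n : ℕ} (hjn : j ≤ n)
    (hj : max (lnorm (convErr b F j)) (lnorm (convErr b F (j + 1)))
      ≤ C * lnorm (emb (den b (j + 1)))) :
    max (lnorm (convErr b F n)) (lnorm (convErr b F (n + 1)))
      ≤ C * lnorm (emb (den b (n + 1))) := by
  induction n, hjn using Nat.le_induction with
  | base => exact hj
  | succ n _ ih =>
    refine (max_lnorm_convErr_succ_le (by linarith [hb (n + 1)])).trans ?_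
    rw [lnorm_emb_den_succ hb (n + 1), mul_left_comm]
    exact mul_le_mul_of_nonneg_left ih (lnorm_nonneg _)

lemma max_lnorm_convErr_le_of_eq_pq (hF : ¬ IsRat F) (hb : ∀ i, 2 ≤ lnorm (emb (b (i + 1))))
    {j n : ℕ} (hjn : j ≤ n) (hab : ∀ i ≤ j + 1, b i = pq F i) :
    max (lnorm (convErr b F n)) (lnorm (convErr b F (n + 1)))
      ≤ lnorm (emb (den b (n + 1))) / lnorm (emb (den (pq F) (j + 1))) ^ 2 := by
  have ha := two_le_lnorm_emb_pq_succ hF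
  have hpos := lnorm_emb_den_pos ha (j + 1)
  have hinv (y : ℝ) : (y ^ 2)⁻¹ * y = y⁻¹ := by field_simp
  rw [div_eq_inv_mul]
  refine max_lnorm_convErr_le_mul_lnorm_den hb hjn ?_
  rw [convErr_congr hab, convErr_congr fun i hi => hab i (by omega), den_congr hab, hinv,
    lnorm_convErr_pq hF, lnorm_convErr_pq hF]
  exact max_le le_rfl (inv_anti₀ hpos (lnorm_emb_den_le_succ ha _))

end ConvergentError

section BadlyApproximable

variable {F : LaurentSeries k}

lemma exists_lnorm_emb_pq_le_of_bad (hF : ¬ IsRat F) (hbad : Bad F) :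
    ∃ C : ℝ, ∀ n, lnorm (emb (pq F (n + 1))) ≤ C := by
  obtain ⟨c, hc, hle⟩ := hbad
  have ha := two_le_lnorm_emb_pq_succ hF
  refine ⟨c⁻¹, fun n => (le_inv_comm₀ hc (by linarith [ha n])).mp ?_⟩
  have hq := lnorm_emb_den_pos ha n
  calc c ≤ lnorm (emb (den (pq F) n)) * fnorm (emb (den (pq F) n) * F) := hle _ (den_ne_zero ha n)
    _ ≤ lnorm (emb (den (pq F) n)) * lnorm (convErr (pq F) F n) :=
        mul_le_mul_of_nonneg_left (fnorm_le_lnorm_sub_emb _ _) hq.le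
    _ = (lnorm (emb (pq F (n + 1))))⁻¹ := by
        rw [lnorm_convErr_pq hF, lnorm_emb_den_succ ha]
        field_simp

lemma isBoundedUnder_natDegree_den_div_of_bad (hF : ¬ IsRat F) (hbad : Bad F) :
    IsBoundedUnder (· ≤ ·) atTop fun l : ℕ => ((den (pq F) l).natDegree : ℝ) / l := by
  obtain ⟨C, hC⟩ := exists_lnorm_emb_pq_le_of_bad hF hbad
  have ha := two_le_lnorm_emb_pq_succ hF
  have hC2 : 2 ≤ C := (ha 0).trans (hC 0)
  have hpow (n : ℕ) : (2 : ℝ) ^ (den (pq F) n).natDegree ≤ C ^ n := by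
    rw [← lnorm_emb (den_ne_zero ha n)]
    induction n with
    | zero => simp [den, emb_one, lnorm_one]
    | succ n ih =>
      rw [lnorm_emb_den_succ ha, pow_succ']
      exact mul_le_mul (hC n) ih (lnorm_nonneg _) (by linarith)
  refine isBoundedUnder_of ⟨Real.logb 2 C, fun n => ?_⟩
  have hlog := Real.logb_le_logb_of_le one_lt_two (by positivity) (hpow n)
  rw [Real.logb_pow, Real.logb_pow, Real.logb_self_eq_one one_lt_two, mul_one] at hlog
  exact div_le_of_le_mul₀ n.cast_nonneg (Real.logb_nonneg one_lt_two (by linarith))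
    (by rwa [mul_comm])

end BadlyApproximable

section LittlewoodProduct

/-- The quantity `|q| ‖qF‖ ‖qF⁻¹‖` of the Littlewood problem for the pair `(F, F⁻¹)`. -/
def littlewoodProduct (q : Polynomial k) (F : LaurentSeries k) : ℝ :=
  lnorm (emb q) * fnorm (emb q * F) * fnorm (emb q * F⁻¹)

variable {F : LaurentSeries k}

lemma fnorm_emb_num_mul_inv_le (b : ℕ → Polynomial k) (hF : F ≠ 0) (n : ℕ) :
    fnorm (emb (num b n) * F⁻¹) ≤ (lnorm F)⁻¹ * lnorm (convErr b F n) := by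
  refine (fnorm_le_lnorm_sub_emb _ (den b n)).trans_eq ?_
  rw [← lnorm_inv, ← lnorm_mul, ← lnorm_neg, convErr]
  congr 1
  field_simp
  ring

lemma littlewoodProduct_den_le {b : ℕ → Polynomial k} (hF : F ≠ 0) {n : ℕ}
    (hb : num b (n + 1) = den b n) :
    littlewoodProduct (den b n) F ≤ (lnorm F)⁻¹ *
      (lnorm (emb (den b n)) * lnorm (convErr b F n) * lnorm (convErr b F (n + 1))) := by
  have hinv := fnorm_emb_num_mul_inv_le b hF (n + 1)
  have herr : fnorm (emb (den b n) * F) ≤ lnorm (convErr b F n) := fnorm_le_lnorm_sub_emb _ _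
  rw [hb] at hinv
  rw [mul_left_comm (lnorm F)⁻¹]
  exact mul_le_mul (mul_le_mul_of_nonneg_left herr (lnorm_nonneg _)) hinv (lnorm_nonneg _)
    (mul_nonneg (lnorm_nonneg _) (lnorm_nonneg _))

lemma exists_littlewoodProduct_le_of_palindrome (hF : ¬ IsRat F) (h0 : pq F 0 = 0) {n : ℕ}
    (hn : n ≠ 0) {w : List (Polynomial k)} (hw : ∀ c ∈ w, 2 ≤ lnorm (emb c))
    (hpal : w.reverse = w) (hpre : word (pq F) 0 n <+: w) :
    ∃ q ≠ 0, littlewoodProduct q F ≤ (lnorm F)⁻¹ *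
      ((w.map fun c => lnorm (emb c)).prod ^ 3 / lnorm (emb (den (pq F) n)) ^ 4) := by
  obtain ⟨j, rfl⟩ := Nat.exists_eq_succ_of_ne_zero hn
  obtain ⟨N, hN⟩ : ∃ N, w.length = N + 1 :=
    Nat.exists_eq_succ_of_ne_zero fun h => by simpa [h, length_word] using hpre.length_le
  have hjN : j ≤ N := by simpa [hN, length_word] using hpre.length_le
  set b := ofWord w
  have hb : ∀ i, 2 ≤ lnorm (emb (b (i + 1))) := two_le_lnorm_emb_ofWord_succ hw
  have hnum : num b (N + 1) = den b N := by
    apply num_succ_eq_den_of_reverse_word_eq rfl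
    rw [← hN, word_ofWord, hpal]
  have herr := max_lnorm_convErr_le_of_eq_pq hF hb hjN fun i hi => ofWord_eq_of_prefix h0 hpre hi
  obtain ⟨herrN, herrN'⟩ := max_le_iff.mp herr
  refine ⟨den b N, den_ne_zero hb N,
    (littlewoodProduct_den_le (ne_zero_of_not_isRat hF) hnum).trans ?_⟩
  rw [← lnorm_emb_den_ofWord hw, hN]
  refine mul_le_mul_of_nonneg_left ?_ (inv_nonneg.mpr (lnorm_nonneg F))
  set D := lnorm (emb (den b (N + 1)))
  set d := lnorm (emb (den (pq F) (j + 1)))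
  have hD : 0 ≤ D := lnorm_nonneg _
  calc _ ≤ D * (D / d ^ 2) * (D / d ^ 2) := by
        gcongr
        · exact lnorm_nonneg _
        · exact lnorm_nonneg _
        · exact lnorm_emb_den_le_succ hb N
    _ = D ^ 3 / d ^ 4 := by ring

lemma exists_littlewoodProduct_le_of_prefix_palindrome (hF : ¬ IsRat F) (h0 : pq F 0 = 0)
    {r s : ℕ} (hrs : r + s ≠ 0) (hpal : (word (pq F) r s).reverse = word (pq F) r s) :
    ∃ q ≠ 0, littlewoodProduct q F ≤ (lnorm F)⁻¹ *
      (lnorm (emb (den (pq F) r)) ^ 3 / lnorm (emb (den (pq F) (r + s)))) := by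
  have ha := two_le_lnorm_emb_pq_succ hF
  set U := word (pq F) 0 r
  set V := word (pq F) r s
  have hUV : U ++ V = word (pq F) 0 (r + s) := word_append_word _ _ _
  have hletters : ∀ c ∈ U ++ V ++ U.reverse, 2 ≤ lnorm (emb c) := by
    have hmem := forall_mem_word (P := fun c => 2 ≤ lnorm (emb c)) ha
    intro c hc
    simp only [List.mem_append, List.mem_reverse] at hc
    rcases hc with (hc | hc) | hc <;> exact hmem _ _ c hc
  obtain ⟨q, hq, hle⟩ := exists_littlewoodProduct_le_of_palindrome hF h0 hrs hletters
    (by simp [hpal]) (hUV ▸ List.prefix_append _ _)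
  refine ⟨q, hq, hle.trans_eq ?_⟩
  rw [List.map_append, List.prod_append, List.map_reverse, List.prod_reverse, hUV,
    ← lnorm_emb_den_eq_prod ha, ← lnorm_emb_den_eq_prod ha]
  have hpos := lnorm_emb_den_pos ha (r + s)
  field_simp

end LittlewoodProduct

section Growth

variable {D : ℕ → ℝ}

lemma exists_forall_le_mul_add_of_limsup_lt {y : ℝ}
    (hbdd : IsBoundedUnder (· ≤ ·) atTop fun l : ℕ => D l / l)
    (hy : limsup (fun l : ℕ => D l / l) atTop < y) : ∃ C, ∀ l : ℕ, D l ≤ y * l + C := by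
  have hev : ∀ᶠ l : ℕ in atTop, D l - y * l ≤ 0 := by
    filter_upwards [eventually_lt_of_limsup_lt hy hbdd, eventually_gt_atTop 0] with l hl hl0
    rw [div_lt_iff₀ (by exact_mod_cast hl0)] at hl
    linarith
  obtain ⟨C, hC⟩ := (isBoundedUnder_of_eventually_le hev).bddAbove_range
  exact ⟨C, fun l => by linarith [hC ⟨l, rfl⟩]⟩

lemma eventually_mul_le_of_lt_liminf {z : ℝ}
    (hbdd : IsBoundedUnder (· ≥ ·) atTop fun l : ℕ => D l / l)
    (hz : z < liminf (fun l : ℕ => D l / l) atTop) : ∀ᶠ l : ℕ in atTop, z * l ≤ D l := by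
  filter_upwards [eventually_lt_of_lt_liminf hz hbdd, eventually_gt_atTop 0] with l hl hl0
  rw [lt_div_iff₀ (by exact_mod_cast hl0)] at hl
  exact hl.le

lemma tendsto_mul_sub_atBot_of_linear_bounds {ι : Type*} {f : Filter ι} {r s : ι → ℕ}
    {c x y z C : ℝ} (hc : 0 ≤ c) (hx : 0 < 1 + x) (hy : 0 ≤ y) (hyz : c * y < (1 + x) * z)
    (hup : ∀ l : ℕ, D l ≤ y * l + C) (hlow : ∀ᶠ l : ℕ in atTop, z * l ≤ D l)
    (hs : Tendsto s f atTop) (hxs : ∀ j, x * r j ≤ s j) :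
    Tendsto (fun j => c * D (r j) - D (r j + s j)) f atBot := by
  have hn : Tendsto (fun j => r j + s j) f atTop :=
    tendsto_atTop_mono (fun j => Nat.le_add_left _ _) hs
  have hslope : c * y / (1 + x) - z < 0 := by
    rw [sub_neg, div_lt_iff₀ hx]
    linarith
  refine tendsto_atBot_mono' f ?_ (tendsto_atBot_add_const_right f (c * C)
    ((tendsto_natCast_atTop_atTop.comp hn).const_mul_atTop_of_neg hslope))
  filter_upwards [hn.eventually hlow] with j hj
  have hr : (r j : ℝ) ≤ ((r j + s j : ℕ) : ℝ) / (1 + x) := by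
    rw [le_div_iff₀ hx]
    push_cast
    linarith [hxs j]
  calc c * D (r j) - D (r j + s j)
      ≤ c * (y * (((r j + s j : ℕ) : ℝ) / (1 + x)) + C) - z * ((r j + s j : ℕ) : ℝ) := by
        gcongr
        exact (hup _).trans (by gcongr)
    _ = (c * y / (1 + x) - z) * ((r j + s j : ℕ) : ℝ) + c * C := by ring

lemma tendsto_mul_sub_atBot_of_limsup_div_liminf_lt {ι : Type*} {f : Filter ι} {r s : ι → ℕ}
    {c x : ℝ} (hc : 0 < c)
    (hbdd : IsBoundedUnder (· ≤ ·) atTop fun l : ℕ => D l / l)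
    (hbdd' : IsBoundedUnder (· ≥ ·) atTop fun l : ℕ => D l / l)
    (hm : 0 < liminf (fun l : ℕ => D l / l) atTop)
    (hcx : c * (limsup (fun l : ℕ => D l / l) atTop / liminf (fun l : ℕ => D l / l) atTop) < 1 + x)
    (hs : Tendsto s f atTop) (hxs : ∀ j, x * r j ≤ s j) :
    Tendsto (fun j => c * D (r j) - D (r j + s j)) f atBot := by
  set M := limsup (fun l : ℕ => D l / l) atTop
  set m := liminf (fun l : ℕ => D l / l) atTop
  have hM : 0 < M := hm.trans_le (liminf_le_limsup hbdd hbdd')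
  have hx : 0 < 1 + x := lt_of_le_of_lt (by positivity) hcx
  rw [← mul_div_assoc, div_lt_iff₀ hm] at hcx
  obtain ⟨t, hMt, htm⟩ := exists_between hcx
  obtain ⟨z, htz, hzm⟩ := exists_between ((div_lt_iff₀' hx).mpr htm)
  have hMy : M < t / c := (lt_div_iff₀' hc).mpr hMt
  obtain ⟨C, hC⟩ := exists_forall_le_mul_add_of_limsup_lt hbdd hMy
  refine tendsto_mul_sub_atBot_of_linear_bounds hc.le hx (hM.trans hMy).le ?_ hC
    (eventually_mul_le_of_lt_liminf hbdd' hzm) hs hxs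
  rwa [mul_div_cancel₀ _ hc.ne', ← div_lt_iff₀' hx]

lemma liminf_natDegree_den_div_pos {b : ℕ → Polynomial k}
    (hb : ∀ i, 2 ≤ lnorm (emb (b (i + 1))))
    (hbdd : IsBoundedUnder (· ≤ ·) atTop fun l : ℕ => ((den b l).natDegree : ℝ) / l) :
    0 < liminf (fun l : ℕ => ((den b l).natDegree : ℝ) / l) atTop := by
  refine one_pos.trans_le (le_liminf_of_le hbdd.isCoboundedUnder_ge ?_)
  filter_upwards [eventually_gt_atTop 0] with l hl
  rw [one_le_div (by exact_mod_cast hl)]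
  exact_mod_cast le_natDegree_den hb l

end Growth

theorem theorem3_general {Θ : LaurentSeries k} (hΘ : ¬ IsRat Θ) (h0 : pq Θ 0 = 0)
    (hbdd : IsBoundedUnder (· ≤ ·) atTop fun l : ℕ => ((den (pq Θ) l).natDegree : ℝ) / l)
    {x : ℝ} {r s : ℕ → ℕ}
    (hpal : ∀ K i : ℕ, 1 ≤ i → i ≤ s K → pq Θ (r K + i) = pq Θ (r K + s K + 1 - i))
    (hs : Tendsto s atTop atTop) (hxs : ∀ K : ℕ, x * (r K : ℝ) ≤ (s K : ℝ)) {M m : ℝ}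
    (hM : M = limsup (fun l : ℕ => ((den (pq Θ) l).natDegree : ℝ) / l) atTop)
    (hm : m = liminf (fun l : ℕ => ((den (pq Θ) l).natDegree : ℝ) / l) atTop)
    (hxMm : 3 * (M / m) - 1 < x) {ε : ℝ} (hε : 0 < ε) :
    ∃ q : Polynomial k, q ≠ 0 ∧ littlewoodProduct q Θ < ε := by
  have ha := two_le_lnorm_emb_pq_succ hΘ
  subst hM hm
  have hgrowth := tendsto_mul_sub_atBot_of_limsup_div_liminf_lt three_pos hbdd
    (isBoundedUnder_of ⟨0, fun l => by positivity⟩) (liminf_natDegree_den_div_pos ha hbdd)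
    (sub_lt_iff_lt_add'.mp hxMm) hs hxs
  have hsmall := ((tendsto_rpow_atBot_of_base_gt_one 2 one_lt_two).comp hgrowth).const_mul
    (lnorm Θ)⁻¹
  rw [mul_zero] at hsmall
  obtain ⟨K, hKε, hK⟩ := ((hsmall.eventually_lt_const hε).and (hs.eventually_gt_atTop 0)).exists
  obtain ⟨q, hq, hle⟩ := exists_littlewoodProduct_le_of_prefix_palindrome hΘ h0
    (r := r K) (s := s K) (by omega) (reverse_word_eq_self (hpal K))
  refine ⟨q, hq, hle.trans_lt (lt_of_eq_of_lt ?_ hKε)⟩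
  rw [Function.comp_apply, Real.rpow_sub two_pos, mul_comm (3 : ℝ), Real.rpow_mul two_pos.le,
    Real.rpow_natCast, Real.rpow_natCast, lnorm_emb (den_ne_zero ha _),
    lnorm_emb (den_ne_zero ha _)]
  norm_cast

theorem theorem3 {k : Type*} [Field k] (Θ : LaurentSeries k)
    (hΘ : ¬ IsRat Θ) (hbad : Bad Θ) (hnorm : lnorm Θ ≤ 1 / 2) (h0 : pq Θ 0 = 0)
    (x : ℝ) (hx : 0 < x) (r s : ℕ → ℕ)
    (hpal : ∀ K : ℕ, ∀ i : ℕ, 1 ≤ i → i ≤ s K →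
      pq Θ (r K + i) = pq Θ (r K + s K + 1 - i))
    (hs : ∀ K : ℕ, s K < s (K + 1))
    (hxs : ∀ K : ℕ, x * (r K : ℝ) ≤ (s K : ℝ))
    (M m : ℝ)
    (hM : M = limsup (fun l : ℕ => ((den (pq Θ) l).natDegree : ℝ) / (l : ℝ)) atTop)
    (hm : m = liminf (fun l : ℕ => ((den (pq Θ) l).natDegree : ℝ) / (l : ℝ)) atTop)
    (hxMm : 3 * (M / m) - 1 < x) :
    ∀ ε : ℝ, 0 < ε → ∃ q : Polynomial k, q ≠ 0 ∧
      lnorm (emb q) * fnorm (emb q * Θ) * fnorm (emb q * Θ⁻¹) < ε := by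
  intro ε hε
  exact theorem3_general hΘ h0 (isBoundedUnder_natDegree_den_div_of_bad hΘ hbad) hpal
    (strictMono_nat_of_lt_succ hs).tendsto_atTop hxs hM hm hxMm hε

end Littlewood
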